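/- arXiv:2208.12597 — 2 statements merged into one kernel-verified Lean document; each statement's English description precedes it below -/
import Mathlib

section
/- In any hoop, the ternary term p(x,y,z) := ((x → y) → z) · (((x → y) → y) → x) is a Mal'tsev operation: for all x and y, p(x, y, y) = x and p(x, x, y) = y. -/
/-!
The identity `p(x, x, y) = y` reduces to `1 → y = y` by (H1). For `p(x, y, y) = x`, put
`u = (x → y) → y`; then `p(x, y, y) = u * (u → x) = x * (x → u)` by (H2), and `x → u = 1` because
`x → u = (x * (x → y)) → y = (y * (y → x)) → y = (y → x) → 1`. What remains are the unit laws
`1 → x = x` and `x → 1 = 1`, which have to be derived from the axioms.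
-/

/-- A hoop: a commutative monoid `(A, ·, 1)` with a residuation `→` satisfying
(H1) `x → x = 1`, (H2) `x · (x → y) = y · (y → x)`, (H3) `(x · y) → z = x → (y → z)`. -/
class Hoop (A : Type*) extends CommMonoid A where
  himp : A → A → A
  himp_self : ∀ x : A, himp x x = 1
  mul_himp_comm : ∀ x y : A, x * himp x y = y * himp y x
  himp_mul : ∀ x y z : A, himp (x * y) z = himp x (himp y z)

/-- The ternary hoop term `p(x,y,z) := ((x → y) → z) · (((x → y) → y) → x)`. -/
def hoopMaltsev {A : Type*} [Hoop A] (x y z : A) : A :=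
  Hoop.himp (Hoop.himp x y) z * Hoop.himp (Hoop.himp (Hoop.himp x y) y) x

/-- `1` is a left unit for `→`. With `a = x → 1` one has `1 → x = x * a` and `1 → a = a`;
applying (H2) to `x` and `1 → x` gives `x = x * a * (a → 1) = x * (1 → a) = x * a`. -/
theorem Hoop.one_himp_aux {A : Type*} [Hoop A] (x : A) : Hoop.himp 1 x = x := by
  have h1 : Hoop.himp 1 x = x * Hoop.himp x 1 := by
    rw [← Hoop.mul_himp_comm, one_mul]
  have h2 : Hoop.himp x (Hoop.himp 1 x) = 1 := by
    rw [← Hoop.himp_mul, mul_one, Hoop.himp_self]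
  have h3 : Hoop.himp (Hoop.himp 1 x) x = Hoop.himp (Hoop.himp x 1) 1 := by
    rw [h1, mul_comm, Hoop.himp_mul, Hoop.himp_self]
  have h4 : Hoop.himp 1 (Hoop.himp x 1) = Hoop.himp x 1 := by
    rw [← Hoop.himp_mul, one_mul]
  have h5 := Hoop.mul_himp_comm x (Hoop.himp 1 x)
  rw [h2, h3, h1, mul_one, mul_assoc, Hoop.mul_himp_comm (Hoop.himp x 1) 1, one_mul, h4] at h5
  rw [h1, ← h5]

theorem Hoop.himp_one_aux {A : Type*} [Hoop A] (x : A) : Hoop.himp x 1 = 1 := by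
  have h : Hoop.himp x 1 * x = x := by
    rw [mul_comm, Hoop.mul_himp_comm, one_mul, Hoop.one_himp_aux]
  calc Hoop.himp x 1 = Hoop.himp (Hoop.himp x 1 * x) 1 := by rw [h]
    _ = 1 := by rw [Hoop.himp_mul, Hoop.himp_self]

/-- The order relation `x ≤ (x → y) → y`, written as an equation. -/
theorem Hoop.himp_himp_himp_aux {A : Type*} [Hoop A] (x y : A) :
    Hoop.himp x (Hoop.himp (Hoop.himp x y) y) = 1 := by
  rw [← Hoop.himp_mul, Hoop.mul_himp_comm, mul_comm, Hoop.himp_mul, Hoop.himp_self,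
    Hoop.himp_one_aux]

/-- In any hoop, `p(x,y,z) := ((x → y) → z) · (((x → y) → y) → x)` is a Mal'tsev
operation: `p(x,y,y) = x` and `p(x,x,y) = y`. -/
theorem hoop_maltsev (A : Type*) [Hoop A] (x y : A) :
    hoopMaltsev x y y = x ∧ hoopMaltsev x x y = y := by
  unfold hoopMaltsev
  constructor
  · rw [Hoop.mul_himp_comm, Hoop.himp_himp_himp_aux, mul_one]
  · rw [Hoop.himp_self, Hoop.one_himp_aux, Hoop.one_himp_aux, Hoop.himp_self, mul_one]
end

section
/- Let W be a Wajsberg hoop and define on w, w' ∈ W the truncated sum w ⊕ w' := (w → (w · w')) → w'. Then the MV-closure M(W), with underlying set W × {0,1}, constant 0 := (1,0), negation ¬(w,i) := (w, 1−i), and addition given by (w,1) ⊕ (w',1) := (w ⊕ w', 1), (w,0) ⊕ (w',0) := (w · w', 0), and (w,0) ⊕ (w',1) = (w',1) ⊕ (w,0) := (w → w', 1), is an MV-algebra: (M(W), ⊕, (1,0)) is a commutative monoid and the axioms (MV1) ¬¬x = x, (MV2) x ⊕ ¬0 = ¬0 and (MV3) ¬(¬x ⊕ y) ⊕ y = ¬(¬y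 ⊕ x) ⊕ x hold. -/
/-- The truncated sum of a (Wajsberg) hoop: `w ⊕ w' := (w → (w · w')) → w'`. -/
def Hoop.sum {W : Type*} [Hoop W] (w w' : W) : W :=
  Hoop.himp (Hoop.himp w (w * w')) w'

/-- Addition of the MV-closure `M(W) = W × {0,1}` of a Wajsberg hoop `W`
(`true` plays the role of the index `1`, `false` of the index `0`):
`(w,1) ⊕ (w',1) := (w ⊕ w', 1)`, `(w,0) ⊕ (w',0) := (w · w', 0)`,
`(w,0) ⊕ (w',1) = (w',1) ⊕ (w,0) := (w → w', 1)`. -/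
def MVClosure.add {W : Type*} [Hoop W] : W × Bool → W × Bool → W × Bool
  | (w, true), (w', true) => (Hoop.sum w w', true)
  | (w, false), (w', false) => (w * w', false)
  | (w, false), (w', true) => (Hoop.himp w w', true)
  | (w, true), (w', false) => (Hoop.himp w' w, true)

/-- Negation of the MV-closure: `¬(w,i) := (w, 1-i)`. -/
def MVClosure.neg {W : Type*} : W × Bool → W × Bool
  | (w, b) => (w, !b)

namespace Hoop

variable {W : Type*} [Hoop W]

/-- The key point is that `c = x → 1` satisfies `c = c · (c → 1)`. -/
theorem one_himp_and_mul_himp_one (x : W) : himp 1 x = x ∧ x * himp x 1 = x := by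
  have h1 : himp 1 x = x * himp x 1 := by simpa using mul_himp_comm 1 x
  have h2 : himp x 1 = himp x 1 * himp (himp x 1) 1 := by
    have h := mul_himp_comm 1 (himp x 1)
    rwa [← himp_mul 1 x 1, one_mul, one_mul] at h
  have h3 : himp (himp 1 x) x = himp (himp x 1) 1 := by
    rw [h1, mul_comm, himp_mul, himp_self]
  have h4 : x = himp 1 x * himp (himp 1 x) x := by
    have h := mul_himp_comm x (himp 1 x)
    rwa [← himp_mul x 1 x, mul_one, himp_self, mul_one] at h
  have h5 : x * himp x 1 = x := by
    rw [h3, h1, mul_assoc, ← h2] at h4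
    exact h4.symm
  exact ⟨h1.trans h5, h5⟩

theorem one_himp (x : W) : himp 1 x = x := (one_himp_and_mul_himp_one x).1

theorem himp_one (x : W) : himp x 1 = 1 := by
  have h : himp (x * himp x 1) 1 = 1 := by rw [mul_comm, himp_mul, himp_self]
  rwa [(one_himp_and_mul_himp_one x).2] at h

theorem himp_left_comm (x y z : W) : himp x (himp y z) = himp y (himp x z) := by
  rw [← himp_mul, mul_comm, himp_mul]

theorem mul_le_left (x y : W) : himp (x * y) x = 1 := by
  rw [mul_comm, himp_mul, himp_self, himp_one]

theorem mul_le_right (x y : W) : himp (x * y) y = 1 := by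
  rw [himp_mul, himp_self, himp_one]

theorem le_himp (x y : W) : himp y (himp x y) = 1 := by
  rw [← himp_mul, mul_le_left]

theorem le_trans {x y z : W} (hxy : himp x y = 1) (hyz : himp y z = 1) : himp x z = 1 := by
  have h := mul_himp_comm x y
  rw [hxy, mul_one] at h
  rw [h, mul_comm, himp_mul, hyz, himp_one]

theorem mul_le_mul_right {x y : W} (h : himp x y = 1) (z : W) : himp (x * z) (y * z) = 1 := by
  have hx := mul_himp_comm x y
  rw [h, mul_one] at hx
  rw [hx, mul_right_comm, mul_le_left]

/-- Double negation in the interval `[p, 1]`. -/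
theorem himp_himp_of_le
    (wajsberg : ∀ x y : W, himp (himp x y) y = himp (himp y x) x) {p x : W}
    (h : himp p x = 1) : himp (himp x p) p = x := by
  rw [wajsberg, h, one_himp]

/-- Contraposition in the interval `[p, 1]`. -/
theorem himp_himp_comm
    (wajsberg : ∀ x y : W, himp (himp x y) y = himp (himp y x) x) {p x z : W}
    (hx : himp p x = 1) (hz : himp p z = 1) :
    himp (himp z p) x = himp (himp x p) z := by
  calc himp (himp z p) x = himp (himp z p) (himp (himp x p) p) := by
        rw [himp_himp_of_le wajsberg hx]
    _ = himp (himp x p) z := by rw [himp_left_comm, himp_himp_of_le wajsberg hz]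

/-- The truncated sum may be computed in any interval `[p, 1]` with `p ≤ x · y`. -/
theorem sum_eq
    (wajsberg : ∀ x y : W, himp (himp x y) y = himp (himp y x) x) {p x y : W}
    (h : himp p (x * y) = 1) : sum x y = himp (himp y p) x := by
  have hx : himp p x = 1 := le_trans h (mul_le_left x y)
  have hy : himp p y = 1 := le_trans h (mul_le_right x y)
  have h1 : himp x (x * y) = himp (himp (himp y p) x) y := by
    calc himp x (x * y) = himp x (himp (himp (x * y) p) p) := by
          rw [himp_himp_of_le wajsberg h]
      _ = himp (x * himp x (himp y p)) p := by rw [← himp_mul x y p, ← himp_mul]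
      _ = himp (himp (himp y p) x) (himp (himp y p) p) := by
          rw [mul_himp_comm, mul_comm, himp_mul]
      _ = himp (himp (himp y p) x) y := by rw [himp_himp_of_le wajsberg hy]
  have h2 : himp y (himp (himp y p) x) = 1 := by
    rw [← himp_mul, mul_himp_comm, mul_comm, himp_mul, hx, himp_one]
  rw [sum, h1, wajsberg, h2, one_himp]

theorem sum_comm
    (wajsberg : ∀ x y : W, himp (himp x y) y = himp (himp y x) x) (x y : W) :
    sum x y = sum y x := by
  rw [sum_eq wajsberg (himp_self (x * y)), sum, mul_comm]

theorem le_sum_right (x y : W) : himp y (sum x y) = 1 := le_himp _ _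

theorem himp_sum
    (wajsberg : ∀ x y : W, himp (himp x y) y = himp (himp y x) x) (x y z : W) :
    sum (himp x y) z = himp x (sum y z) := by
  have h1 : himp (y * z) (y * z) = 1 := himp_self _
  have h2 : himp (y * z) (himp x y * z) = 1 := mul_le_mul_right (le_himp x y) z
  rw [sum_eq wajsberg h1, sum_eq wajsberg h2, himp_left_comm]

theorem sum_assoc
    (wajsberg : ∀ x y : W, himp (himp x y) y = himp (himp y x) x) (x y z : W) :
    sum (sum x y) z = sum x (sum y z) := by
  have h1 : himp (x * y * z) (x * y) = 1 := mul_le_left _ _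
  have h2 : himp (x * y * z) (z * y) = 1 := by
    rw [mul_assoc, mul_comm z y]
    exact mul_le_right _ _
  have h3 : himp (x * y * z) (sum x y * z) = 1 :=
    mul_le_mul_right (le_trans (mul_le_right x y) (le_sum_right x y)) z
  have h4 : himp (x * y * z) (sum z y * x) = 1 := by
    have h := mul_le_mul_right (le_trans (mul_le_right z y) (le_sum_right z y)) x
    rwa [show z * y * x = x * y * z by rw [mul_comm, mul_comm z y, mul_assoc]] at h
  -- Both sides are computed in `[xyz, 1]`; by `sum_comm` the right one is `(z ⊕ y) ⊕ x`.
  rw [sum_comm wajsberg x (sum y z), sum_comm wajsberg y z, sum_eq wajsberg h3,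
    sum_eq wajsberg h4, sum_eq wajsberg h1, sum_eq wajsberg h2,
    himp_left_comm (himp x (x * y * z)),
    himp_left_comm (himp z (x * y * z))]
  rw [himp_himp_comm wajsberg (le_trans h1 (mul_le_left x y)) (mul_le_right (x * y) z)]

/-- The mixed case of the axiom (MV3). -/
theorem sum_himp
    (wajsberg : ∀ x y : W, himp (himp x y) y = himp (himp y x) x) (x y : W) :
    himp (sum y x) x = himp y (x * y) := by
  rw [sum, wajsberg, ← himp_mul x y, mul_comm y x, himp_self, one_himp]

end Hoop

/-- The MV-closure `M(W)` of a Wajsberg hoop `W`, with zero `(1,0)`, negation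
`¬(w,i) = (w,1-i)` and the truncated addition above, is an MV-algebra:
`(M(W), ⊕, (1,0))` is a commutative monoid satisfying (MV1), (MV2) and (MV3). -/
theorem mv_closure_is_MV_algebra (W : Type*) [Hoop W]
    (wajsberg : ∀ x y : W, Hoop.himp (Hoop.himp x y) y = Hoop.himp (Hoop.himp y x) x) :
    (∀ a b c : W × Bool, MVClosure.add (MVClosure.add a b) c = MVClosure.add a (MVClosure.add b c)) ∧
    (∀ a b : W × Bool, MVClosure.add a b = MVClosure.add b a) ∧
    (∀ a : W × Bool, MVClosure.add a ((1 : W), false) = a) ∧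
    (∀ a : W × Bool, MVClosure.neg (MVClosure.neg a) = a) ∧
    (∀ a : W × Bool, MVClosure.add a (MVClosure.neg ((1 : W), false)) =
      MVClosure.neg ((1 : W), false)) ∧
    (∀ a b : W × Bool,
      MVClosure.add (MVClosure.neg (MVClosure.add (MVClosure.neg a) b)) b =
        MVClosure.add (MVClosure.neg (MVClosure.add (MVClosure.neg b) a)) a) := by
  have comm : ∀ a b : W × Bool, MVClosure.add a b = MVClosure.add b a := by
    rintro ⟨x, _ | _⟩ ⟨y, _ | _⟩ <;> simp only [MVClosure.add]
    · rw [mul_comm]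
    · rw [Hoop.sum_comm wajsberg]
  refine ⟨?_, comm, ?_, ?_, ?_, ?_⟩
  · rintro ⟨x, _ | _⟩ ⟨y, _ | _⟩ ⟨z, _ | _⟩ <;> simp only [MVClosure.add]
    · rw [mul_assoc]
    · rw [Hoop.himp_mul]
    · rw [Hoop.himp_left_comm]
    · rw [Hoop.himp_sum wajsberg]
    · rw [mul_comm, Hoop.himp_mul]
    · rw [Hoop.himp_sum wajsberg, Hoop.sum_comm wajsberg x (Hoop.himp y z),
        Hoop.himp_sum wajsberg, Hoop.sum_comm wajsberg x]
    · rw [Hoop.sum_comm wajsberg x (Hoop.himp z y), Hoop.himp_sum wajsberg,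
        Hoop.sum_comm wajsberg x]
    · rw [Hoop.sum_assoc wajsberg]
  · rintro ⟨x, _ | _⟩ <;> simp [MVClosure.add, Hoop.one_himp]
  · rintro ⟨x, _ | _⟩ <;> rfl
  · rintro ⟨x, _ | _⟩ <;>
      simp [MVClosure.add, MVClosure.neg, Hoop.himp_one, Hoop.sum, Hoop.himp_self]
  · rintro ⟨x, _ | _⟩ ⟨y, _ | _⟩ <;>
      simp only [MVClosure.add, MVClosure.neg, Bool.not_true, Bool.not_false]
    · rw [mul_comm, Hoop.mul_himp_comm, mul_comm]
    · rw [Hoop.sum_himp wajsberg, mul_comm]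
    · rw [Hoop.sum_himp wajsberg]
    · rw [wajsberg]
end
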